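/- arXiv:1012.5783 — 2 statements merged into one kernel-verified Lean document; each statement's English description precedes it below -/
import Mathlib

section
/- The set of generic functions is dense in C^1(S^1, ℝ^2), where a C^1 function f: S^1 → ℝ^2 is generic if it is an immersion and its image has at most finitely many multiple points, all of which are clean double points. -/
/-!
A Steklov mean of a `C¹` closed curve is `C²` and `C¹`-close to it, so the curve may be
assumed to be `C²`. Identify the plane with `ℂ`, let `z` be the standard embedding of the
circle as the unit circle, and perturb `F` to `F + a z + b z²` with `(a, b)` in the real
four-dimensional space `ℂ²`. The parameters that produce a stationary point, a triple point
or a tangential double point can be solved for: each bad set lies in the `C¹` image of a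
three-dimensional manifold, parametrized by the points of the circle involved together with
`b` or with the ratio `l` of the two velocities. Hence it has Hausdorff dimension at most
three, and its complement is dense. The tangency equation determines `b` unless `z(y) + l
z(x) = 0`, which forces `x` and `y` to be antipodal; antipodal double points are themselves
avoidable, as they determine `a`. A curve without these degeneracies has only finitely many
double points, because immersivity and transversality isolate the pairs of parameters with a
common value, and the torus is compact.
-/

open Set Real Filter Topology

noncomputable section

abbrev Circ := AddCircle (2 * π)

def liftOf (F : Circ → ℝ × ℝ) : ℝ → ℝ × ℝ := fun t => F (t : Circ)

def IsC1 (F : Circ → ℝ × ℝ) : Prop := ContDiff ℝ 1 (liftOf F)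

def tangentAt (F : Circ → ℝ × ℝ) (t : ℝ) : Submodule ℝ (ℝ × ℝ) :=
  Submodule.span ℝ {deriv (liftOf F) t}

def Generic (F : Circ → ℝ × ℝ) : Prop :=
  IsC1 F ∧ (∀ t : ℝ, deriv (liftOf F) t ≠ 0) ∧
  {p : ℝ × ℝ | ∃ x y : Circ, x ≠ y ∧ F x = p ∧ F y = p}.Finite ∧
  (∀ p : ℝ × ℝ, (∃ x y : Circ, x ≠ y ∧ F x = p ∧ F y = p) →
    ∃ x y : Circ, x ≠ y ∧ {z : Circ | F z = p} = {x, y}) ∧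
  (∀ t₁ t₂ : ℝ, liftOf F t₁ = liftOf F t₂ → tangentAt F t₁ = tangentAt F t₂ →
    (t₁ : Circ) = (t₂ : Circ))

def Dset (u : ℝ × ℝ) : Set (ℝ × ℝ) := {w | w.1 ≤ u.1 ∧ w.2 ≤ u.2}

def persBetti (F : Circ → ℝ × ℝ) (u v : ℝ × ℝ) : ℕ :=
  ((fun x => connectedComponentIn (F ⁻¹' Dset v) x) '' (F ⁻¹' Dset u)).ncard

def Sigma2 : Set ((ℝ × ℝ) → (ℝ × ℝ)) :=
  {id, fun p => (-p.1, p.2), fun p => (p.1, -p.2), fun p => (-p.1, -p.2)}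

def CircleDiffeo (H : Circ → Circ) : Prop :=
  ∃ h : ℝ → ℝ, ContDiff ℝ 1 h ∧ (∀ t, deriv h t ≠ 0) ∧
    ((∀ t, h (t + 2 * π) = h t + 2 * π) ∨ (∀ t, h (t + 2 * π) = h t - 2 * π)) ∧
    (∀ t : ℝ, H (t : Circ) = ((h t : ℝ) : Circ))

def C1dist (F G : Circ → ℝ × ℝ) : ℝ :=
  ⨆ t : ℝ, (‖liftOf F t - liftOf G t‖ + ‖deriv (liftOf F) t - deriv (liftOf G) t‖)

def cross (a b : ℝ × ℝ) : ℝ := a.1 * b.2 - a.2 * b.1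

section RealLift

variable {T : ℝ} {E : Type*}

/-- The `T`-periodic function on the line represented by a function on the circle `ℝ / Tℤ`;
smoothness of a closed curve is expressed as smoothness of its lift. -/
def realLift (F : AddCircle T → E) (t : ℝ) : E := F t

/-- The velocity of a closed curve, as a function on the circle; moving the base point to `0`
avoids choosing a real representative of `x`. -/
def velocity [NormedAddCommGroup E] [NormedSpace ℝ E] (F : AddCircle T → E) (x : AddCircle T) : E :=
  deriv (fun t : ℝ => F (x + t)) 0

lemma continuous_realLift_iff [TopologicalSpace E] {F : AddCircle T → E} :
    Continuous (realLift F) ↔ Continuous F :=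
  QuotientAddGroup.isOpenQuotientMap_mk.isQuotientMap.continuous_iff.symm

lemma nhds_coe_prodMk (s t : ℝ) :
    𝓝 ((s : AddCircle T), (t : AddCircle T)) =
      map (Prod.map ((↑) : ℝ → AddCircle T) (↑)) (𝓝 (s, t)) :=
  ((QuotientAddGroup.isOpenQuotientMap_mk.prodMap
    QuotientAddGroup.isOpenQuotientMap_mk).map_nhds_eq (s, t)).symm

variable [NormedAddCommGroup E] [NormedSpace ℝ E] {F : AddCircle T → E}

lemma velocity_coe (F : AddCircle T → E) (t : ℝ) :
    velocity F (t : AddCircle T) = deriv (realLift F) t := by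
  simpa [velocity, realLift] using deriv_comp_const_add (realLift F) t 0

lemma realLift_velocity (F : AddCircle T → E) : realLift (velocity F) = deriv (realLift F) :=
  funext (velocity_coe F)

lemma hasStrictDerivAt_realLift (hF : ContDiff ℝ 1 (realLift F)) (t : ℝ) :
    HasStrictDerivAt (realLift F) (velocity F (t : AddCircle T)) t := by
  rw [velocity_coe]
  exact hF.contDiffAt.hasStrictDerivAt one_ne_zero

lemma contDiff_realLift_velocity {n : ℕ∞} (hF : ContDiff ℝ (n + 1) (realLift F)) :
    ContDiff ℝ n (realLift (velocity F)) := by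
  rw [realLift_velocity]
  exact (contDiff_succ_iff_deriv.1 hF).2.2

lemma continuous_velocity (hF : ContDiff ℝ 1 (realLift F)) : Continuous (velocity F) := by
  rw [← continuous_realLift_iff, realLift_velocity]
  exact hF.continuous_deriv le_rfl

end RealLift

section Steklov

open MeasureTheory

variable {T : ℝ} {E : Type*} [NormedAddCommGroup E] [NormedSpace ℝ E] {F : AddCircle T → E}

/-- The Steklov mean: the average of `F` over the arc from `x` to `x + h`. -/
def steklovMean (h : ℝ) (F : AddCircle T → E) (x : AddCircle T) : E := ⨍ t in 0..h, F (x + t)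

lemma realLift_steklovMean (hF : Continuous F) (h t : ℝ) :
    realLift (steklovMean h F) t =
      h⁻¹ • ((∫ s in 0..t + h, realLift F s) - ∫ s in 0..t, realLift F s) := by
  have hI (a b : ℝ) : IntervalIntegrable (realLift F) volume a b :=
    (continuous_realLift_iff.2 hF).intervalIntegrable a b
  have hshift := intervalIntegral.integral_comp_add_left (a := 0) (b := h) (realLift F) t
  rw [intervalIntegral.integral_interval_sub_left (hI _ _) (hI _ _)]
  simpa [realLift, steklovMean, interval_average_eq] using congrArg (h⁻¹ • ·) hshift

variable [CompleteSpace E]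

lemma hasDerivAt_realLift_steklovMean (hF : Continuous F) (h t : ℝ) :
    HasDerivAt (realLift (steklovMean h F)) (h⁻¹ • (realLift F (t + h) - realLift F t)) t := by
  have hprim (s : ℝ) : HasDerivAt (fun r => ∫ u in 0..r, realLift F u) (realLift F s) s :=
    (continuous_realLift_iff.2 hF).integral_hasStrictDerivAt 0 s |>.hasDerivAt
  rw [funext (realLift_steklovMean hF h)]
  exact (((hprim (t + h)).comp_add_const t h).sub (hprim t)).const_smul h⁻¹

lemma contDiff_succ_realLift_steklovMean {n : ℕ} (hF : ContDiff ℝ n (realLift F)) (h : ℝ) :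
    ContDiff ℝ (n + 1) (realLift (steklovMean h F)) := by
  have hderiv := hasDerivAt_realLift_steklovMean (continuous_realLift_iff.1 hF.continuous) h
  refine contDiff_succ_iff_deriv.2 ⟨fun t => (hderiv t).differentiableAt, by simp, ?_⟩
  rw [funext fun t => (hderiv t).deriv]
  fun_prop

lemma velocity_steklovMean (hF : ContDiff ℝ 1 (realLift F)) (h : ℝ) :
    velocity (steklovMean h F) = steklovMean h (velocity F) := by
  funext x
  obtain ⟨t, rfl⟩ := QuotientAddGroup.mk_surjective x
  have hcont := continuous_realLift_iff.1 hF.continuous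
  have hcont' := continuous_realLift_iff.2 (continuous_velocity hF)
  have hFTC (a : ℝ) : ∫ s in 0..a, realLift (velocity F) s = realLift F a - realLift F 0 :=
    intervalIntegral.integral_eq_sub_of_hasDerivAt
      (fun s _ => (hasStrictDerivAt_realLift hF s).hasDerivAt) (hcont'.intervalIntegrable 0 a)
  change velocity _ (t : AddCircle T) = realLift (steklovMean h (velocity F)) t
  rw [velocity_coe, (hasDerivAt_realLift_steklovMean hcont h t).deriv,
    realLift_steklovMean (continuous_velocity hF), hFTC, hFTC, sub_sub_sub_cancel_right]

lemma tendstoUniformly_steklovMean [Fact (0 < T)] (hF : Continuous F) :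
    TendstoUniformly (fun h => steklovMean h F) F (𝓝[>] 0) := by
  rw [Metric.tendstoUniformly_iff]
  intro ε hε
  obtain ⟨δ, hδ, hFδ⟩ := Metric.uniformContinuous_iff.1
    (CompactSpace.uniformContinuous_of_continuous hF) (ε / 2) (half_pos hε)
  filter_upwards [Ioo_mem_nhdsGT hδ] with h ⟨hh, hhδ⟩ x
  suffices steklovMean h F x ∈ Metric.closedBall (F x) (ε / 2) by
    rw [dist_comm]
    exact (Metric.mem_closedBall.1 this).trans_lt (half_lt_self hε)
  have hcont : Continuous fun t : ℝ => F (x + t) :=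
    hF.comp (continuous_const.add (AddCircle.continuous_mk' T))
  rw [steklovMean, uIoc_of_le hh.le]
  refine (convex_closedBall _ _).set_average_mem Metric.isClosed_closedBall
    (by simpa using hh) (by simp) ?_
    ((hcont.integrableOn_Icc (a := 0) (b := h)).mono_set Ioc_subset_Icc_self)
  refine ae_restrict_of_forall_mem measurableSet_Ioc fun t ht => (hFδ ?_).le
  have hnorm : ‖(t : AddCircle T)‖ ≤ ‖t‖ := QuotientAddGroup.norm_mk_le_norm
  rw [dist_self_add_left]
  exact hnorm.trans_lt (by rw [Real.norm_of_nonneg ht.1.le]; exact ht.2.trans_lt hhδ)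

theorem exists_contDiff_two_near [Fact (0 < T)] (hF : ContDiff ℝ 1 (realLift F)) {ε : ℝ}
    (hε : 0 < ε) :
    ∃ G : AddCircle T → E, ContDiff ℝ 2 (realLift G) ∧
      ∀ x, dist (F x) (G x) < ε ∧ dist (velocity F x) (velocity G x) < ε := by
  have hpos := tendstoUniformly_steklovMean (continuous_realLift_iff.1 hF.continuous)
  have hvel := tendstoUniformly_steklovMean (continuous_velocity hF)
  obtain ⟨h, hh, hh'⟩ := ((Metric.tendstoUniformly_iff.1 hpos ε hε).and
    (Metric.tendstoUniformly_iff.1 hvel ε hε)).exists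
  refine ⟨steklovMean h F, ?_, fun x => ⟨hh x, ?_⟩⟩
  · exact_mod_cast contDiff_succ_realLift_steklovMean (n := 1) (by exact_mod_cast hF) h
  · rw [velocity_steklovMean hF]
    exact hh' x

end Steklov

section NormalCurve

variable {T : ℝ} {E E' : Type*} [NormedAddCommGroup E] [NormedSpace ℝ E]
  [NormedAddCommGroup E'] [NormedSpace ℝ E'] {G : AddCircle T → E} {x y : AddCircle T}

/-- Normal closed curves in the sense of Whitney: `C¹` immersions of the circle without triple
points whose two branches at every double point are transverse. -/
structure IsNormalCurve (G : AddCircle T → E) : Prop where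
  contDiff : ContDiff ℝ 1 (realLift G)
  velocity_ne_zero : ∀ x, velocity G x ≠ 0
  eq_or_eq_or_eq : ∀ x y z, G x = G y → G x = G z → x = y ∨ x = z ∨ y = z
  linearIndependent : ∀ x y, x ≠ y → G x = G y → LinearIndependent ℝ ![velocity G x, velocity G y]

lemma eventually_eq_imp_eq_of_velocity_ne_zero (hG : ContDiff ℝ 1 (realLift G))
    (hx : velocity G x ≠ 0) :
    ∀ᶠ p in 𝓝 (x, x), G p.1 = G p.2 → p.1 = p.2 := by
  obtain ⟨s, rfl⟩ := QuotientAddGroup.mk_surjective x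
  have hinj := ((hasStrictDerivAt_realLift hG s).isTheta_sub hx).isBigO_symm.eq_zero_imp
  rw [nhds_coe_prodMk, eventually_map]
  filter_upwards [hinj] with p hp hGp
  exact congrArg _ (sub_eq_zero.1 (hp (sub_eq_zero.2 hGp)))

lemma eventually_ne_of_linearIndependent_velocity (hG : ContDiff ℝ 1 (realLift G))
    (hxy : LinearIndependent ℝ ![velocity G x, velocity G y]) :
    ∀ᶠ p in 𝓝 (x, y), p ≠ (x, y) → G p.1 ≠ G p.2 := by
  obtain ⟨s, rfl⟩ := QuotientAddGroup.mk_surjective x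
  obtain ⟨t, rfl⟩ := QuotientAddGroup.mk_surjective y
  have hfst := (hasStrictDerivAt_realLift hG s).hasDerivAt.hasFDerivAt.comp (s, t)
    (hasFDerivAt_fst (𝕜 := ℝ))
  have hsnd := (hasStrictDerivAt_realLift hG t).hasDerivAt.hasFDerivAt.comp (s, t)
    (hasFDerivAt_snd (𝕜 := ℝ))
  have hdiff := hfst.sub hsnd
  have hne := hdiff.eventually_ne (c := 0) <| by
    refine (LinearMap.injective_iff_antilipschitz _).1 ?_ |>.imp fun _ h => h.2
    refine (injective_iff_map_eq_zero _).2 fun v hv => ?_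
    have hpair := LinearIndependent.pair_iff.1 hxy v.1 (-v.2) (by simpa [sub_eq_add_neg] using hv)
    exact Prod.ext hpair.1 (neg_eq_zero.1 hpair.2)
  rw [nhds_coe_prodMk, eventually_map]
  filter_upwards [eventually_nhdsWithin_iff.1 hne] with p hp hpst hGp
  exact hp (fun h => hpst (congrArg _ h)) (sub_eq_zero.2 hGp)

lemma IsNormalCurve.finite_doublePairs [Fact (0 < T)] (hG : IsNormalCurve G) :
    {p : AddCircle T × AddCircle T | p.1 ≠ p.2 ∧ G p.1 = G p.2}.Finite := by
  have hcont : Continuous G := continuous_realLift_iff.1 hG.contDiff.continuous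
  by_contra hinf
  obtain ⟨⟨x, y⟩, hacc⟩ := Set.Infinite.exists_accPt_principal hinf
  rw [accPt_iff_frequently] at hacc
  have hGxy : G x = G y := by
    have hclosed : IsClosed {p : AddCircle T × AddCircle T | G p.1 = G p.2} :=
      isClosed_eq (hcont.comp continuous_fst) (hcont.comp continuous_snd)
    exact hclosed.mem_of_frequently_of_tendsto (hacc.mono fun p hp => hp.2.2) tendsto_id
  rcases eq_or_ne x y with rfl | hxy
  · obtain ⟨p, ⟨-, hne, heq⟩, hinj⟩ := (hacc.and_eventually
      (eventually_eq_imp_eq_of_velocity_ne_zero hG.contDiff (hG.velocity_ne_zero x))).exists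
    exact hne (hinj heq)
  · obtain ⟨p, ⟨hpxy, -, heq⟩, hiso⟩ := (hacc.and_eventually
      (eventually_ne_of_linearIndependent_velocity hG.contDiff
        (hG.linearIndependent x y hxy hGxy))).exists
    exact hiso hpxy heq

lemma velocity_continuousLinearEquiv_comp (L : E ≃L[ℝ] E') (G : AddCircle T → E)
    (x : AddCircle T) : velocity (L ∘ G) x = L (velocity G x) :=
  congrArg (· 1) (L.comp_fderiv (f := fun t : ℝ => G (x + t)) (x := 0))

lemma IsNormalCurve.continuousLinearEquiv_comp (hG : IsNormalCurve G) (L : E ≃L[ℝ] E') :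
    IsNormalCurve (L ∘ G) where
  contDiff := L.contDiff.comp hG.contDiff
  velocity_ne_zero x := by
    simpa [velocity_continuousLinearEquiv_comp] using hG.velocity_ne_zero x
  eq_or_eq_or_eq x y z hxy hxz :=
    hG.eq_or_eq_or_eq x y z (L.injective hxy) (L.injective hxz)
  linearIndependent x y hxy hGxy := by
    have hind := hG.linearIndependent x y hxy (L.injective hGxy)
    rw [LinearIndependent.pair_iff] at hind ⊢
    intro a b hab
    rw [velocity_continuousLinearEquiv_comp, velocity_continuousLinearEquiv_comp, ← map_smul,
      ← map_smul, ← map_add, L.map_eq_zero_iff] at hab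
    exact hind a b hab

end NormalCurve

section Generic

lemma IsNormalCurve.generic {G : Circ → ℝ × ℝ} (hG : IsNormalCurve G) :
    Generic G := by
  have : Fact (0 < 2 * π) := ⟨two_pi_pos⟩
  refine ⟨hG.contDiff, fun t => ?_, ?_, ?_, fun s t hst htan => ?_⟩
  · exact velocity_coe G t ▸ hG.velocity_ne_zero t
  · refine (hG.finite_doublePairs.image fun p => G p.1).subset ?_
    rintro p ⟨x, y, hxy, hx, hy⟩
    exact ⟨(x, y), ⟨hxy, hx.trans hy.symm⟩, hx⟩
  · rintro p ⟨x, y, hxy, hx, hy⟩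
    refine ⟨x, y, hxy, Set.ext fun z => ⟨fun hz => ?_, ?_⟩⟩
    · have := hG.eq_or_eq_or_eq x y z (hx.trans hy.symm) (hx.trans hz.symm)
      grind
    · rintro (rfl | rfl) <;> assumption
  · by_contra hne
    have hspan : deriv (liftOf G) t ∈ tangentAt G s :=
      htan ▸ Submodule.mem_span_singleton_self _
    obtain ⟨l, hl⟩ := Submodule.mem_span_singleton.1 hspan
    have hind := hG.linearIndependent s t hne hst
    rw [LinearIndependent.pair_iff' (hG.velocity_ne_zero s), velocity_coe, velocity_coe] at hind
    exact hind l hl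

lemma C1dist_le {F G : Circ → ℝ × ℝ} {a b : ℝ} (hpos : ∀ x, dist (F x) (G x) ≤ a)
    (hvel : ∀ x, dist (velocity F x) (velocity G x) ≤ b) : C1dist F G ≤ a + b := by
  refine ciSup_le fun t => add_le_add ?_ ?_
  · exact dist_eq_norm (F t) (G t) ▸ hpos t
  · have h := hvel t
    rwa [velocity_coe, velocity_coe, dist_eq_norm] at h

end Generic

section Dimension

open Module

variable {X Y : Type*} [NormedAddCommGroup X] [NormedSpace ℝ X] [FiniteDimensional ℝ X]
  [NormedAddCommGroup Y] [NormedSpace ℝ Y]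

lemma dimH_image_le_finrank_of_contDiffAt {f : X → Y} {s : Set X}
    (hf : ∀ x ∈ s, ContDiffAt ℝ 1 f x) : dimH (f '' s) ≤ finrank ℝ X := by
  have hlip : dimH (f '' s) ≤ dimH s := dimH_image_le_of_locally_lipschitzOn fun x hx =>
    let ⟨K, t, ht, hKt⟩ := (hf x hx).exists_lipschitzOnWith
    ⟨K, t, mem_nhdsWithin_of_mem_nhds ht, hKt⟩
  calc dimH (f '' s) ≤ dimH s := hlip
    _ ≤ dimH univ := dimH_mono (subset_univ s)
    _ = finrank ℝ X := Real.dimH_univ_eq_finrank X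

end Dimension

section Phase

variable {T : ℝ} {x y : AddCircle T}

/-- The embedding of the circle `ℝ / Tℤ` in `ℂ` as the unit circle. -/
def phase (x : AddCircle T) : ℂ := AddCircle.toCircle x

/-- The angular frequency `2πi / T` of `phase`. -/
def angularFreq (T : ℝ) : ℂ := 2 * π * Complex.I / T

/-- The antipodal point, half a period away. -/
def antipode (x : AddCircle T) : AddCircle T := x + ((T / 2 : ℝ) : AddCircle T)

lemma norm_phase (x : AddCircle T) : ‖phase x‖ = 1 := Circle.norm_coe _

lemma phase_ne_zero (x : AddCircle T) : phase x ≠ 0 := Circle.coe_ne_zero _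

lemma hasDerivAt_realLift_phase (t : ℝ) :
    HasDerivAt (realLift (phase (T := T))) (angularFreq T * phase (t : AddCircle T)) t := by
  change HasDerivAt (fun s : ℝ => phase (s : AddCircle T)) _ t
  simpa [phase, angularFreq] using hasDerivAt_fourier T 1 t

lemma contDiff_realLift_phase {n : WithTop ℕ∞} : ContDiff ℝ n (realLift (phase (T := T))) := by
  have hexp : realLift (phase (T := T)) = fun t : ℝ => Complex.exp (2 * π / T * t * Complex.I) := by
    ext t
    simp [realLift, phase, AddCircle.toCircle_apply_mk]
  rw [hexp]
  exact ((contDiff_const.mul Complex.ofRealCLM.contDiff).mul contDiff_const).cexp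

variable [Fact (0 < T)]

lemma angularFreq_ne_zero : angularFreq T ≠ 0 := by
  have hT : T ≠ 0 := (Fact.out : 0 < T).ne'
  simp [angularFreq, hT, pi_ne_zero]

lemma phase_injective : Function.Injective (phase (T := T)) :=
  Subtype.coe_injective.comp (AddCircle.injective_toCircle (Fact.out : 0 < T).ne')

lemma phase_sub_ne_zero (hxy : x ≠ y) : phase x - phase y ≠ 0 :=
  sub_ne_zero.2 (phase_injective.ne hxy)

lemma phase_antipode (x : AddCircle T) : phase (antipode x) = -phase x := by
  simpa [phase, antipode] using fourier_add_half_inv_index one_ne_zero Fact.out x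

lemma ne_antipode (x : AddCircle T) : x ≠ antipode x := fun h =>
  self_ne_neg.2 (phase_ne_zero x) ((congrArg phase h).trans (phase_antipode x))

lemma eq_antipode_of_phase_add_mul_eq_zero (hxy : x ≠ y) {l : ℝ}
    (h : phase y + l * phase x = 0) : y = antipode x := by
  have hy : phase y = -(l * phase x) := eq_neg_of_add_eq_zero_left h
  have hl : |l| = 1 := by
    simpa [norm_phase] using (congrArg norm hy).symm
  apply phase_injective
  rw [phase_antipode, hy]
  rcases eq_or_eq_neg_of_abs_eq hl with rfl | rfl
  · simp
  · exact absurd (phase_injective (by simpa using hy.symm)) hxy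

end Phase

section Perturbation

variable {T : ℝ} {F : AddCircle T → ℂ} {c : ℂ × ℂ} {x y w : AddCircle T}

/-- The perturbation `F + a z + b z²` of the closed curve `F`, where `z` is `phase` and
`c = (a, b)`. -/
def perturb (F : AddCircle T → ℂ) (c : ℂ × ℂ) (x : AddCircle T) : ℂ :=
  F x + c.1 * phase x + c.2 * phase x ^ 2

lemma contDiff_realLift_perturb {n : WithTop ℕ∞} (hF : ContDiff ℝ n (realLift F)) (c : ℂ × ℂ) :
    ContDiff ℝ n (realLift (perturb F c)) :=
  (hF.add (contDiff_const.mul contDiff_realLift_phase)).add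
    (contDiff_const.mul (contDiff_realLift_phase.pow 2))

lemma velocity_perturb (hF : ContDiff ℝ 1 (realLift F)) (c : ℂ × ℂ) (x : AddCircle T) :
    velocity (perturb F c) x =
      velocity F x + angularFreq T * (c.1 * phase x + 2 * c.2 * phase x ^ 2) := by
  obtain ⟨t, rfl⟩ := QuotientAddGroup.mk_surjective x
  have hz := hasDerivAt_realLift_phase (T := T) t
  have hderiv := ((hasStrictDerivAt_realLift hF t).hasDerivAt.add (hz.const_mul c.1)).add
    ((hz.pow 2).const_mul c.2)
  refine (velocity_coe (perturb F c) t).trans (hderiv.deriv.trans ?_)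
  simp only [realLift, Nat.cast_ofNat, Nat.add_one_sub_one, pow_one]
  ring

lemma dist_perturb_le (F : AddCircle T → ℂ) (c : ℂ × ℂ) (x : AddCircle T) :
    dist (F x) (perturb F c x) ≤ 2 * ‖c‖ := by
  have hsub : perturb F c x - F x = c.1 * phase x + c.2 * phase x ^ 2 := by
    rw [perturb]
    ring
  calc dist (F x) (perturb F c x) ≤ ‖c.1 * phase x‖ + ‖c.2 * phase x ^ 2‖ := by
        rw [dist_comm, dist_eq_norm, hsub]
        exact norm_add_le _ _
    _ = ‖c.1‖ + ‖c.2‖ := by simp [norm_phase]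
    _ ≤ 2 * ‖c‖ := by linarith [norm_fst_le c, norm_snd_le c]

lemma dist_velocity_perturb_le (hF : ContDiff ℝ 1 (realLift F)) (c : ℂ × ℂ) (x : AddCircle T) :
    dist (velocity F x) (velocity (perturb F c) x) ≤ ‖angularFreq T‖ * (3 * ‖c‖) := by
  rw [velocity_perturb hF, dist_self_add_right, norm_mul]
  gcongr
  calc ‖c.1 * phase x + 2 * c.2 * phase x ^ 2‖ ≤ ‖c.1 * phase x‖ + ‖2 * c.2 * phase x ^ 2‖ :=
        norm_add_le _ _
    _ = ‖c.1‖ + 2 * ‖c.2‖ := by simp [norm_phase]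
    _ ≤ 3 * ‖c‖ := by linarith [norm_fst_le c, norm_snd_le c]

/-- The divided difference of `F` with respect to `phase`; it takes the junk value `0` on the
diagonal. -/
def divDiff (F : AddCircle T → ℂ) (x y : AddCircle T) : ℂ := (F x - F y) / (phase x - phase y)

variable [Fact (0 < T)]

lemma fst_eq_of_velocity_perturb_eq_zero (hF : ContDiff ℝ 1 (realLift F))
    (h : velocity (perturb F c) x = 0) :
    c.1 = -(velocity F x / (angularFreq T * phase x)) - 2 * c.2 * phase x := by
  have hω := angularFreq_ne_zero (T := T)
  have hz := phase_ne_zero x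
  rw [velocity_perturb hF] at h
  field_simp
  linear_combination h

lemma fst_eq_of_perturb_eq (hxy : x ≠ y) (h : perturb F c x = perturb F c y) :
    c.1 = -divDiff F x y - c.2 * (phase x + phase y) := by
  have hz := phase_sub_ne_zero hxy
  rw [perturb, perturb] at h
  rw [divDiff]
  field_simp
  linear_combination h

lemma snd_eq_of_perturb_eq_of_perturb_eq (hxy : x ≠ y) (hxw : x ≠ w) (hyw : y ≠ w)
    (h : perturb F c x = perturb F c y) (h' : perturb F c x = perturb F c w) :
    c.2 = -((divDiff F x y - divDiff F x w) / (phase y - phase w)) := by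
  have hz := phase_sub_ne_zero hyw
  field_simp
  linear_combination fst_eq_of_perturb_eq hxy h - fst_eq_of_perturb_eq hxw h'

lemma snd_eq_of_velocity_perturb_eq_smul (hF : ContDiff ℝ 1 (realLift F)) (hxy : x ≠ y)
    (h : perturb F c x = perturb F c y) {l : ℝ} (hl : phase y + l * phase x ≠ 0)
    (hv : l • velocity (perturb F c) x = velocity (perturb F c) y) :
    c.2 = (velocity F y - angularFreq T * divDiff F x y * phase y -
        l * (velocity F x - angularFreq T * divDiff F x y * phase x)) /
      (angularFreq T * (phase x - phase y) * (phase y + l * phase x)) := by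
  have hω := angularFreq_ne_zero (T := T)
  have hz := phase_sub_ne_zero hxy
  rw [velocity_perturb hF, velocity_perturb hF, fst_eq_of_perturb_eq hxy h,
    Complex.real_smul] at hv
  rw [eq_div_iff (by positivity)]
  linear_combination hv

end Perturbation

section BadParameters

open Module

variable {T : ℝ} {F : AddCircle T → ℂ} {X : Type*} [NormedAddCommGroup X] [NormedSpace ℝ X]
  {n : WithTop ℕ∞}

lemma contDiffAt_complex_div {f g : X → ℂ} {p : X} (hf : ContDiffAt ℝ n f p)
    (hg : ContDiffAt ℝ n g p) (hp : g p ≠ 0) : ContDiffAt ℝ n (fun q => f q / g q) p := by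
  simp only [div_eq_mul_inv]
  exact hf.mul (hg.inv hp)

lemma contDiff_comp_coe (hF : ContDiff ℝ n (realLift F)) {u : X → ℝ} (hu : ContDiff ℝ n u) :
    ContDiff ℝ n fun p => F (u p) :=
  hF.comp hu

lemma contDiff_phase_comp_coe {u : X → ℝ} (hu : ContDiff ℝ n u) :
    ContDiff ℝ n fun p => phase (u p : AddCircle T) :=
  contDiff_comp_coe contDiff_realLift_phase hu

variable [Fact (0 < T)]

lemma contDiffAt_divDiff (hF : ContDiff ℝ n (realLift F)) {u v : X → ℝ} (hu : ContDiff ℝ n u)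
    (hv : ContDiff ℝ n v) {p : X} (hp : (u p : AddCircle T) ≠ v p) :
    ContDiffAt ℝ n (fun q => divDiff F (u q) (v q)) p :=
  contDiffAt_complex_div ((contDiff_comp_coe hF hu).sub (contDiff_comp_coe hF hv)).contDiffAt
    ((contDiff_phase_comp_coe hu).sub (contDiff_phase_comp_coe hv)).contDiffAt
    (phase_sub_ne_zero hp)

lemma dimH_setOf_perturb_eq_and_snd_eq_le [FiniteDimensional ℝ X]
    (hF : ContDiff ℝ 1 (realLift F)) {u v : X → ℝ} {b : X → ℂ} {s : Set X} (hu : ContDiff ℝ 1 u)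
    (hv : ContDiff ℝ 1 v) (hb : ∀ p ∈ s, ContDiffAt ℝ 1 b p)
    (huv : ∀ p ∈ s, (u p : AddCircle T) ≠ v p) :
    dimH {c | ∃ p ∈ s, perturb F c (u p) = perturb F c (v p) ∧ c.2 = b p} ≤ finrank ℝ X := by
  let a (p : X) : ℂ :=
    -divDiff F (u p) (v p) - b p * (phase (u p : AddCircle T) + phase (v p : AddCircle T))
  have ha (p) (hp : p ∈ s) : ContDiffAt ℝ 1 a p :=
    (contDiffAt_divDiff hF hu hv (huv p hp)).neg.sub ((hb p hp).mul
      ((contDiff_phase_comp_coe hu).add (contDiff_phase_comp_coe hv)).contDiffAt)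
  refine (dimH_mono ?_).trans
    (dimH_image_le_finrank_of_contDiffAt fun p hp => (ha p hp).prodMk (hb p hp))
  rintro c ⟨p, hp, heq, hc⟩
  refine ⟨p, hp, Prod.ext ?_ hc.symm⟩
  simpa only [a, ← hc] using (fst_eq_of_perturb_eq (huv p hp) heq).symm

lemma dimH_setOf_velocity_perturb_eq_zero_le (hF : ContDiff ℝ 2 (realLift F)) :
    dimH {c | ∃ x, velocity (perturb F c) x = 0} ≤ 3 := by
  let a (p : ℝ × ℂ) : ℂ := -(velocity F p.1 / (angularFreq T * phase (p.1 : AddCircle T))) -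
    2 * p.2 * phase (p.1 : AddCircle T)
  have ha (p) : ContDiffAt ℝ 1 a p := by
    have hv : ContDiffAt ℝ 1 (fun q : ℝ × ℂ => velocity F q.1) p :=
      (contDiff_comp_coe (contDiff_realLift_velocity (n := 1) hF) contDiff_fst).contDiffAt
    have hz : ContDiffAt ℝ 1 (fun q : ℝ × ℂ => phase (q.1 : AddCircle T)) p :=
      (contDiff_phase_comp_coe contDiff_fst).contDiffAt
    exact (contDiffAt_complex_div hv (contDiffAt_const.mul hz)
      (mul_ne_zero angularFreq_ne_zero (phase_ne_zero _))).neg.sub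
      ((contDiffAt_const.mul contDiffAt_snd).mul hz)
  have hdim := dimH_image_le_finrank_of_contDiffAt (s := univ)
    fun p _ => (ha p).prodMk contDiffAt_snd
  refine ((dimH_mono ?_).trans hdim).trans (by norm_num)
  rintro c ⟨x, hx⟩
  obtain ⟨t, rfl⟩ := QuotientAddGroup.mk_surjective x
  exact ⟨(t, c.2), trivial,
    Prod.ext (fst_eq_of_velocity_perturb_eq_zero (hF.of_le one_le_two) hx).symm rfl⟩

lemma dimH_setOf_perturb_eq_antipode_le (hF : ContDiff ℝ 1 (realLift F)) :
    dimH {c | ∃ x, perturb F c x = perturb F c (antipode x)} ≤ 3 := by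
  have hdim := dimH_setOf_perturb_eq_and_snd_eq_le (X := ℝ × ℂ) (s := univ) hF contDiff_fst
    (contDiff_fst.add (contDiff_const (c := T / 2))) (fun p _ => contDiffAt_snd)
    (fun p _ => ne_antipode _)
  refine ((dimH_mono ?_).trans hdim).trans (by norm_num)
  rintro c ⟨x, hx⟩
  obtain ⟨t, rfl⟩ := QuotientAddGroup.mk_surjective x
  exact ⟨(t, c.2), trivial, hx, rfl⟩

lemma dimH_setOf_perturb_triple_point_le (hF : ContDiff ℝ 1 (realLift F)) :
    dimH {c | ∃ x y w, x ≠ y ∧ x ≠ w ∧ y ≠ w ∧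
      perturb F c x = perturb F c y ∧ perturb F c x = perturb F c w} ≤ 3 := by
  let s : Set (ℝ × ℝ × ℝ) := {p | (p.1 : AddCircle T) ≠ p.2.1 ∧ (p.1 : AddCircle T) ≠ p.2.2 ∧
    (p.2.1 : AddCircle T) ≠ p.2.2}
  have hy : ContDiff ℝ 1 fun p : ℝ × ℝ × ℝ => p.2.1 := contDiff_fst.comp contDiff_snd
  have hw : ContDiff ℝ 1 fun p : ℝ × ℝ × ℝ => p.2.2 := contDiff_snd.comp contDiff_snd
  let b (p : ℝ × ℝ × ℝ) : ℂ := -((divDiff F p.1 p.2.1 - divDiff F p.1 p.2.2) /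
    (phase (p.2.1 : AddCircle T) - phase (p.2.2 : AddCircle T)))
  have hb (p) (hp : p ∈ s) : ContDiffAt ℝ 1 b p :=
    (contDiffAt_complex_div
      ((contDiffAt_divDiff hF contDiff_fst hy hp.1).sub
        (contDiffAt_divDiff hF contDiff_fst hw hp.2.1))
      ((contDiff_phase_comp_coe hy).sub (contDiff_phase_comp_coe hw)).contDiffAt
      (phase_sub_ne_zero hp.2.2)).neg
  have hdim := dimH_setOf_perturb_eq_and_snd_eq_le hF contDiff_fst hy hb fun p hp => hp.1
  refine ((dimH_mono ?_).trans hdim).trans (by norm_num)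
  rintro c ⟨x, y, w, hxy, hxw, hyw, hPy, hPw⟩
  obtain ⟨r, rfl⟩ := QuotientAddGroup.mk_surjective x
  obtain ⟨s, rfl⟩ := QuotientAddGroup.mk_surjective y
  obtain ⟨t, rfl⟩ := QuotientAddGroup.mk_surjective w
  exact ⟨(r, s, t), ⟨hxy, hxw, hyw⟩, hPy, snd_eq_of_perturb_eq_of_perturb_eq hxy hxw hyw hPy hPw⟩

lemma dimH_setOf_perturb_tangency_le (hF : ContDiff ℝ 2 (realLift F)) :
    dimH {c | ∃ x y, ∃ l : ℝ, x ≠ y ∧ phase y + l * phase x ≠ 0 ∧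
      perturb F c x = perturb F c y ∧
      l • velocity (perturb F c) x = velocity (perturb F c) y} ≤ 3 := by
  have hF₁ : ContDiff ℝ 1 (realLift F) := hF.of_le one_le_two
  have hV : ContDiff ℝ 1 (realLift (velocity F)) := contDiff_realLift_velocity (n := 1) hF
  let s : Set (ℝ × ℝ × ℝ) := {p | (p.1 : AddCircle T) ≠ p.2.1 ∧
    phase (p.2.1 : AddCircle T) + p.2.2 * phase (p.1 : AddCircle T) ≠ 0}
  have hx : ContDiff ℝ 1 fun p : ℝ × ℝ × ℝ => p.1 := contDiff_fst
  have hy : ContDiff ℝ 1 fun p : ℝ × ℝ × ℝ => p.2.1 := contDiff_fst.comp contDiff_snd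
  have hl : ContDiff ℝ 1 fun p : ℝ × ℝ × ℝ => (p.2.2 : ℂ) :=
    Complex.ofRealCLM.contDiff.comp (contDiff_snd.comp contDiff_snd)
  have hzx := contDiff_phase_comp_coe (T := T) hx
  have hzy := contDiff_phase_comp_coe (T := T) hy
  let d (u : ℝ × ℝ × ℝ → ℝ) (p : ℝ × ℝ × ℝ) : ℂ :=
    velocity F (u p) - angularFreq T * divDiff F p.1 p.2.1 * phase (u p : AddCircle T)
  let b (p : ℝ × ℝ × ℝ) : ℂ := (d (fun q => q.2.1) p - p.2.2 * d (fun q => q.1) p) /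
    (angularFreq T * (phase (p.1 : AddCircle T) - phase (p.2.1 : AddCircle T)) *
      (phase (p.2.1 : AddCircle T) + p.2.2 * phase (p.1 : AddCircle T)))
  have hd {u : ℝ × ℝ × ℝ → ℝ} (hu : ContDiff ℝ 1 u) (p) (hp : p ∈ s) : ContDiffAt ℝ 1 (d u) p :=
    (contDiff_comp_coe hV hu).contDiffAt.sub <|
      (contDiffAt_const.mul (contDiffAt_divDiff hF₁ hx hy hp.1)).mul
        (contDiff_phase_comp_coe hu).contDiffAt
  have hb (p) (hp : p ∈ s) : ContDiffAt ℝ 1 b p :=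
    contDiffAt_complex_div ((hd hy p hp).sub (hl.contDiffAt.mul (hd hx p hp)))
      ((contDiff_const.mul (hzx.sub hzy)).mul (hzy.add (hl.mul hzx))).contDiffAt
      (mul_ne_zero (mul_ne_zero angularFreq_ne_zero (phase_sub_ne_zero hp.1)) hp.2)
  have hdim := dimH_setOf_perturb_eq_and_snd_eq_le hF₁ hx hy hb fun p hp => hp.1
  refine ((dimH_mono ?_).trans hdim).trans (by norm_num)
  rintro c ⟨x, y, l, hxy, hl, hP, hv⟩
  obtain ⟨s, rfl⟩ := QuotientAddGroup.mk_surjective x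
  obtain ⟨t, rfl⟩ := QuotientAddGroup.mk_surjective y
  exact ⟨(s, t, l), ⟨hxy, hl⟩, hP, snd_eq_of_velocity_perturb_eq_smul hF₁ hxy hP hl hv⟩

end BadParameters

section Approximation

open Module

variable {T : ℝ} [Fact (0 < T)] {F : AddCircle T → ℂ}

theorem dense_setOf_isNormalCurve_perturb (hF : ContDiff ℝ 2 (realLift F)) :
    Dense {c | IsNormalCurve (perturb F c)} := by
  have hF₁ : ContDiff ℝ 1 (realLift F) := hF.of_le one_le_two
  have hdim := max_le (max_le (dimH_setOf_velocity_perturb_eq_zero_le hF)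
    (dimH_setOf_perturb_eq_antipode_le hF₁))
    (max_le (dimH_setOf_perturb_triple_point_le hF₁) (dimH_setOf_perturb_tangency_le hF))
  rw [← dimH_union, ← dimH_union, ← dimH_union] at hdim
  have hfinrank : (3 : ENNReal) < finrank ℝ (ℂ × ℂ) := by norm_num
  refine (dense_compl_of_dimH_lt_finrank (hdim.trans_lt hfinrank)).mono fun c hc => ?_
  simp only [mem_compl_iff, mem_union, mem_ofPred_eq, not_or, not_exists] at hc
  obtain ⟨⟨hvelocity, hantipode⟩, htriple, htangency⟩ := hc
  refine ⟨contDiff_realLift_perturb hF₁ c, hvelocity, fun x y w hxy hxw => ?_,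
    fun x y hne hxy => (LinearIndependent.pair_iff' (hvelocity x)).2 fun l hl => ?_⟩
  · by_contra! h
    exact htriple x y w ⟨h.1, h.2.1, h.2.2, hxy, hxw⟩
  · refine htangency x y l ⟨hne, fun h => ?_, hxy, hl⟩
    exact hantipode x (eq_antipode_of_phase_add_mul_eq_zero hne h ▸ hxy)

theorem exists_isNormalCurve_near (hF : ContDiff ℝ 1 (realLift F)) {ε : ℝ} (hε : 0 < ε) :
    ∃ G : AddCircle T → ℂ, IsNormalCurve G ∧
      ∀ x, dist (F x) (G x) < ε ∧ dist (velocity F x) (velocity G x) < ε := by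
  obtain ⟨H, hH, hFH⟩ := exists_contDiff_two_near hF (half_pos hε)
  have hpos : Continuous fun c : ℂ × ℂ => 2 * ‖c‖ := by fun_prop
  have hvel : Continuous fun c : ℂ × ℂ => ‖angularFreq T‖ * (3 * ‖c‖) := by fun_prop
  have hsmall := ((hpos.tendsto' 0 0 (by simp)).eventually_lt_const (half_pos hε)).and
    ((hvel.tendsto' 0 0 (by simp)).eventually_lt_const (half_pos hε))
  obtain ⟨c, hc, hcpos, hcvel⟩ :=
    ((mem_closure_iff_frequently.1 (dense_setOf_isNormalCurve_perturb hH 0)).and_eventually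
      hsmall).exists
  refine ⟨perturb H c, hc, fun x => ⟨?_, ?_⟩⟩
  · linarith [dist_triangle (F x) (H x) (perturb H c x), (hFH x).1, dist_perturb_le H c x]
  · linarith [dist_triangle (velocity F x) (velocity H x) (velocity (perturb H c) x), (hFH x).2,
      dist_velocity_perturb_le (hH.of_le one_le_two) c x]

end Approximation

/-- The set of generic functions is dense in `C¹(S¹, ℝ²)` (with the C¹ topology,
expressed via the C¹ distance). -/
theorem generic_dense (F : Circ → ℝ × ℝ) (hF : IsC1 F) :
    ∀ ε : ℝ, 0 < ε → ∃ G : Circ → ℝ × ℝ, Generic G ∧ C1dist F G < ε := by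
  intro ε hε
  have : Fact (0 < 2 * π) := ⟨two_pi_pos⟩
  let e := Complex.equivRealProdCLM
  have hdist (z w : ℂ) : dist (e z) (e w) ≤ dist z w := by
    rw [dist_eq_norm, dist_eq_norm, ← map_sub]
    exact Complex.equivRealProd_apply_le _
  obtain ⟨G, hG, hFG⟩ := exists_isNormalCurve_near (F := e.symm ∘ F)
    (e.symm.contDiff.comp hF) (ε := ε / 3) (by positivity)
  have hF_eq : F = e ∘ (e.symm ∘ F) := by ext1 x; simp
  refine ⟨e ∘ G, (hG.continuousLinearEquiv_comp e).generic, ?_⟩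
  rw [hF_eq]
  refine (C1dist_le (a := ε / 3) (b := ε / 3) (fun x => ?_) fun x => ?_).trans_lt (by linarith)
  · exact (hdist _ _).trans (hFG x).1.le
  · rw [velocity_continuousLinearEquiv_comp e, velocity_continuousLinearEquiv_comp e]
    exact (hdist _ _).trans (hFG x).2.le
end
end

section
/- Let f, g: S^1 → ℝ^2 be generic functions such that H_0^{u,v}(s∘f) = H_0^{u,v}(s∘g) for every (u,v) ∈ Δ^+ and every s in the group Σ_2 generated by reflections in the coordinate axes. Then f(S^1) = g(S^1). -/
open Set Real Filter Topology

noncomputable section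

/-!
When the coordinate lines through `v` meet the curve at finitely many parameters, the number of
components of `F ⁻¹' Iic v` is the limit of persistent Betti numbers `persBetti F v w` as `w`
decreases to `v`, by continuity of Čech homology. On the circle the components of a proper closed
set correspond to its right endpoints, and counting right endpoints is additive up to the finite
overlap of two closed sets. Applied to the sublevel sets of `F` and of its reflection in the first
coordinate, whose union is again a sublevel set, this additivity recovers the number of parameters
`z` with `(F z).1 = a` and `(F z).2 ≤ b`. Its jumps in `b` locate the points of the curve on the
line with first coordinate `a`.

Hence every point of `F` on a generic vertical or horizontal line lies on `G`. On an arc of `F`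
that avoids `G` both coordinates avoid a dense set of values, so they are constant there; then `F`
is constant, and the Betti numbers of `F` and its reflections force `G` through that point.
-/

section Components

variable {X : Type*} [TopologicalSpace X]

theorem isClosed_connectedComponentIn {S : Set X} (hS : IsClosed S) (x : X) :
    IsClosed (connectedComponentIn S x) := by
  by_cases hx : x ∈ S
  · refine isClosed_of_closure_subset ?_
    exact isPreconnected_connectedComponentIn.closure.subset_connectedComponentIn
      (subset_closure (mem_connectedComponentIn hx))
      (closure_minimal (connectedComponentIn_subset S x) hS)
  · exact connectedComponentIn_eq_empty hx ▸ isClosed_empty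

theorem finite_image_connectedComponentIn [LocallyConnectedSpace X] {A B : Set X}
    (hA : IsCompact A) (hAB : A ⊆ interior B) : (connectedComponentIn B '' A).Finite := by
  obtain ⟨t, -, hcover⟩ := hA.elim_nhds_subcover (connectedComponentIn B) fun x hx =>
    connectedComponentIn_mem_nhds (mem_interior_iff_mem_nhds.1 (hAB hx))
  refine (t.finite_toSet.image (connectedComponentIn B)).subset ?_
  rintro _ ⟨x, hx, rfl⟩
  obtain ⟨y, hy, hxy⟩ := mem_iUnion₂.1 (hcover hx)
  exact ⟨y, hy, connectedComponentIn_eq hxy⟩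

-- In a compact Hausdorff space components are intersections of clopen sets.
theorem exists_isOpen_separating_of_connectedComponentIn_ne [T2Space X] {K : Set X}
    (hK : IsCompact K) {x y : X} (hx : x ∈ K) (hy : y ∈ K)
    (hxy : connectedComponentIn K x ≠ connectedComponentIn K y) :
    ∃ U V, IsOpen U ∧ IsOpen V ∧ Disjoint U V ∧ K ⊆ U ∪ V ∧ x ∈ U ∧ y ∈ V := by
  have : CompactSpace K := isCompact_iff_compactSpace.1 hK
  have hy_notMem : (⟨y, hy⟩ : K) ∉ connectedComponent ⟨x, hx⟩ := fun hmem => hxy <|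
    connectedComponentIn_eq <| by
      rw [connectedComponentIn_eq_image hx]
      exact mem_image_of_mem Subtype.val hmem
  simp only [connectedComponent_eq_iInter_isClopen, mem_iInter, not_forall] at hy_notMem
  obtain ⟨⟨Z, hZ, hxZ⟩, hyZ⟩ := hy_notMem
  obtain ⟨U, V, hU, hV, hZU, hZV, hUV⟩ := SeparatedNhds.of_isCompact_isCompact
    (hZ.isClosed.isCompact.image continuous_subtype_val)
    (hZ.compl.isClosed.isCompact.image continuous_subtype_val)
    ((disjoint_image_iff Subtype.val_injective).2 disjoint_compl_right)
  refine ⟨U, V, hU, hV, hUV, fun z hz => ?_, hZU ⟨_, hxZ, rfl⟩, hZV ⟨_, hyZ, rfl⟩⟩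
  by_cases hzZ : (⟨z, hz⟩ : K) ∈ Z
  · exact Or.inl (hZU ⟨_, hzZ, rfl⟩)
  · exact Or.inr (hZV ⟨_, hzZ, rfl⟩)

variable {ι : Type*} {l : Filter ι} {K : Set X} {L : ι → Set X}

theorem eventually_connectedComponentIn_ne [T2Space X] (hK : IsCompact K)
    (hKL : ∀ᶠ i in l, K ⊆ L i) (hL : ∀ W, IsOpen W → K ⊆ W → ∀ᶠ i in l, L i ⊆ W)
    {x y : X} (hx : x ∈ K) (hy : y ∈ K)
    (hxy : connectedComponentIn K x ≠ connectedComponentIn K y) :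
    ∀ᶠ i in l, connectedComponentIn (L i) x ≠ connectedComponentIn (L i) y := by
  obtain ⟨U, V, hU, hV, hUV, hKUV, hxU, hyV⟩ :=
    exists_isOpen_separating_of_connectedComponentIn_ne hK hx hy hxy
  filter_upwards [hKL, hL _ (hU.union hV) hKUV] with i hKi hLi hcomp
  have hsub : connectedComponentIn (L i) x ⊆ U :=
    isPreconnected_connectedComponentIn.subset_left_of_subset_union hU hV hUV
      ((connectedComponentIn_subset _ _).trans hLi) ⟨x, mem_connectedComponentIn (hKi hx), hxU⟩
  exact disjoint_left.1 hUV (hsub (hcomp ▸ mem_connectedComponentIn (hKi hy))) hyV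

-- Continuity of Čech homology in degree zero.
theorem eventually_ncard_image_connectedComponentIn_eq [T2Space X] (hK : IsCompact K)
    (hfin : (connectedComponentIn K '' K).Finite) (hKL : ∀ᶠ i in l, K ⊆ L i)
    (hL : ∀ W, IsOpen W → K ⊆ W → ∀ᶠ i in l, L i ⊆ W) :
    ∀ᶠ i in l,
      (connectedComponentIn (L i) '' K).ncard = (connectedComponentIn K '' K).ncard := by
  obtain ⟨T, hTK, hT⟩ := exists_subset_bijOn K (connectedComponentIn K)
  have hTfin : T.Finite := hT.finite_iff_finite.2 hfin
  have hinj : ∀ᶠ i in l, InjOn (connectedComponentIn (L i)) T := by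
    simp only [InjOn, eventually_all_finite hTfin]
    intro x hx y hy
    by_cases hxy : x = y
    · exact Eventually.of_forall fun _ _ => hxy
    · filter_upwards [eventually_connectedComponentIn_ne hK hKL hL (hTK hx) (hTK hy)
        (hT.injOn.ne hx hy hxy)] with i hi heq using absurd heq hi
  filter_upwards [hKL, hinj] with i hKi hinji
  have himage : connectedComponentIn (L i) '' K = connectedComponentIn (L i) '' T := by
    refine Subset.antisymm ?_ (image_mono hTK)
    rintro _ ⟨x, hx, rfl⟩
    obtain ⟨y, hy, hyx⟩ := hT.surjOn ⟨x, hx, rfl⟩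
    refine ⟨y, hy, connectedComponentIn_eq (connectedComponentIn_mono y hKi ?_)⟩
    exact hyx ▸ mem_connectedComponentIn hx
  rw [himage, hinji.ncard_image, ← hT.image_eq, hT.injOn.ncard_image]

theorem eventually_preimage_Iic_subset [CompactSpace X] {P : Type*} [TopologicalSpace P]
    [Preorder P] [OrderClosedTopology P] {f : X → P} (hf : Continuous f) {v : P} {W : Set X}
    (hW : IsOpen W) (hfW : f ⁻¹' Iic v ⊆ W) : ∀ᶠ w in 𝓝 v, f ⁻¹' Iic w ⊆ W := by
  have hle : IsClosed {q : P × X | f q.2 ≤ q.1} :=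
    isClosed_le (hf.comp continuous_snd) continuous_fst
  have hcompl : ∀ᶠ w in 𝓝 v, ∀ x ∈ Wᶜ, ¬ f x ≤ w :=
    hW.isClosed_compl.isCompact.eventually_forall_of_forall_eventually fun x hx =>
      hle.isOpen_compl.mem_nhds fun hxv => hx (hfW hxv)
  filter_upwards [hcompl] with w hw x hxw
  exact not_not.1 fun hx => hw x hx hxw

end Components

section CircleSubsets

variable {p : ℝ}

instance locallyConnectedSpace_addCircle : LocallyConnectedSpace (AddCircle p) :=
  (QuotientAddGroup.isQuotientMap_mk _).isCoinducing.locallyConnectedSpace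

/-- The filter of right-hand neighbourhoods of a point of the circle, for the orientation induced
by the quotient map from the line. -/
def rightNhds (z : AddCircle p) : Filter (AddCircle p) :=
  map (fun e : ℝ => z + (e : AddCircle p)) (𝓝[>] 0)

instance rightNhds_neBot (z : AddCircle p) : (rightNhds z).NeBot := by
  unfold rightNhds
  infer_instance

theorem rightNhds_le_nhds (z : AddCircle p) : rightNhds z ≤ 𝓝 z := by
  have hcont : Continuous fun e : ℝ => z + (e : AddCircle p) :=
    continuous_const.add (AddCircle.continuous_mk' p)
  have := hcont.tendsto 0
  rw [AddCircle.coe_zero, add_zero] at this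
  exact this.mono_left nhdsWithin_le_nhds

theorem rightNhds_le_nhdsNE [hp : Fact (0 < p)] (z : AddCircle p) : rightNhds z ≤ 𝓝[≠] z := by
  refine le_inf (rightNhds_le_nhds z) (le_principal_iff.2 (mem_map.2 ?_))
  filter_upwards [Ioo_mem_nhdsGT hp.out] with e he
  simp [AddCircle.coe_eq_zero_iff_of_mem_Ico (Ioo_subset_Ico_self he), he.1.ne']

theorem rightNhds_coe (t : ℝ) :
    rightNhds (t : AddCircle p) = map ((↑) : ℝ → AddCircle p) (𝓝[>] t) := by
  have : 𝓝[>] t = map (t + ·) (𝓝[>] 0) := by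
    rw [map_add_left_nhdsGT, add_zero]
  rw [this, map_map]
  rfl

theorem mem_rightNhds_coe {t : ℝ} {S : Set (AddCircle p)} :
    S ∈ rightNhds (t : AddCircle p) ↔ ((↑) : ℝ → AddCircle p) ⁻¹' S ∈ 𝓝[>] t := by
  rw [rightNhds_coe, mem_map]

theorem mem_rightNhds_or_of_union_mem {A B : Set (AddCircle p)} (hA : IsClosed A)
    (hB : IsClosed B) {z : AddCircle p} (hunion : A ∪ B ∈ rightNhds z)
    (hinter : (A ∩ B)ᶜ ∈ rightNhds z) : A ∈ rightNhds z ∨ B ∈ rightNhds z := by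
  obtain ⟨t, rfl⟩ := QuotientAddGroup.mk_surjective z
  have hcoe := AddCircle.continuous_mk' p
  obtain ⟨u, htu, hu⟩ := mem_nhdsGT_iff_exists_Ioo_subset.1
    (mem_rightNhds_coe.1 (inter_mem hunion hinter))
  have hIoo := isPreconnected_iff_subset_of_disjoint_closed.1 isPreconnected_Ioo
    _ _ (hA.preimage hcoe) (hB.preimage hcoe) (fun s hs => (hu hs).1)
    (disjoint_iff_inter_eq_empty.1 (disjoint_left.2 fun s hs => (hu hs).2))
  exact hIoo.imp (fun h => mem_rightNhds_coe.2 (mem_of_superset (Ioo_mem_nhdsGT htu) h))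
    fun h => mem_rightNhds_coe.2 (mem_of_superset (Ioo_mem_nhdsGT htu) h)

theorem connectedComponentIn_mem_rightNhds {S : Set (AddCircle p)} {z : AddCircle p} (hz : z ∈ S)
    (h : S ∈ rightNhds z) : connectedComponentIn S z ∈ rightNhds z := by
  obtain ⟨t, rfl⟩ := QuotientAddGroup.mk_surjective z
  obtain ⟨u, htu, hu⟩ := mem_nhdsGT_iff_exists_Ioo_subset.1 (mem_rightNhds_coe.1 h)
  have harc : ((↑) : ℝ → AddCircle p) '' Ico t u ⊆ S := by
    rintro _ ⟨s, hs, rfl⟩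
    rcases hs.1.eq_or_lt with rfl | hts
    · exact hz
    · exact hu ⟨hts, hs.2⟩
  have hcomp := (isPreconnected_Ico.image _
    (AddCircle.continuous_mk' p).continuousOn).subset_connectedComponentIn
    (mem_image_of_mem _ (left_mem_Ico.2 htu)) harc
  exact mem_rightNhds_coe.2 (mem_of_superset (Ioo_mem_nhdsGT htu) fun s hs =>
    hcomp ⟨s, Ioo_subset_Ico_self hs, rfl⟩)

/-- The points at which a subset of the circle ends when the circle is traversed in the positive
direction; for a proper closed subset there is one of them on each component. -/
def rightEndpoints (S : Set (AddCircle p)) : Set (AddCircle p) :=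
  {z ∈ S | S ∉ rightNhds z}

theorem rightEndpoints_subset_frontier (S : Set (AddCircle p)) :
    rightEndpoints S ⊆ frontier S := fun z hz =>
  ⟨subset_closure hz.1, fun hint =>
    hz.2 (rightNhds_le_nhds z (mem_interior_iff_mem_nhds.1 hint))⟩

theorem mem_of_mem_rightNhds {S : Set (AddCircle p)} (hS : IsClosed S) {z : AddCircle p}
    (h : S ∈ rightNhds z) : z ∈ S := by
  by_contra hz
  exact compl_notMem h (rightNhds_le_nhds z (hS.isOpen_compl.mem_nhds hz))

theorem exists_between_coe_notMem {S : Set (AddCircle p)} {t u : ℝ}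
    (ht : (t : AddCircle p) ∈ rightEndpoints S) (htu : t < u) :
    ∃ r, t < r ∧ r < u ∧ (r : AddCircle p) ∉ S := by
  by_contra! h
  exact ht.2 (mem_rightNhds_coe.2 (mem_of_superset (Ioo_mem_nhdsGT htu) fun r hr =>
    h r hr.1 hr.2))

section Union

variable [Fact (0 < p)] {A B : Set (AddCircle p)}

theorem compl_mem_rightNhds_of_finite {T : Set (AddCircle p)} (hT : T.Finite) (z : AddCircle p) :
    Tᶜ ∈ rightNhds z :=
  rightNhds_le_nhdsNE z (nhdsNE_le_cofinite z hT.compl_mem_cofinite)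

theorem mem_rightNhds_union_iff (hA : IsClosed A) (hB : IsClosed B) (hAB : (A ∩ B).Finite)
    (z : AddCircle p) : A ∪ B ∈ rightNhds z ↔ A ∈ rightNhds z ∨ B ∈ rightNhds z :=
  ⟨fun h => mem_rightNhds_or_of_union_mem hA hB h (compl_mem_rightNhds_of_finite hAB z),
    fun h => h.elim (mem_of_superset · subset_union_left) (mem_of_superset · subset_union_right)⟩

theorem not_mem_rightNhds_and_mem_rightNhds (hAB : (A ∩ B).Finite) (z : AddCircle p) :
    ¬ (A ∈ rightNhds z ∧ B ∈ rightNhds z) := fun h =>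
  compl_notMem (inter_mem h.1 h.2) (compl_mem_rightNhds_of_finite hAB z)

theorem rightEndpoints_union_rightEndpoints (hA : IsClosed A) (hB : IsClosed B)
    (hAB : (A ∩ B).Finite) :
    rightEndpoints A ∪ rightEndpoints B = rightEndpoints (A ∪ B) ∪ A ∩ B := by
  ext z
  have hunion := mem_rightNhds_union_iff hA hB hAB z
  have hinter := not_mem_rightNhds_and_mem_rightNhds hAB z
  have hAz : A ∈ rightNhds z → z ∈ A := mem_of_mem_rightNhds hA
  have hBz : B ∈ rightNhds z → z ∈ B := mem_of_mem_rightNhds hB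
  simp only [rightEndpoints, mem_union, mem_inter_iff, mem_ofPred_eq]
  tauto

theorem rightEndpoints_inter_rightEndpoints (hA : IsClosed A) (hB : IsClosed B)
    (hAB : (A ∩ B).Finite) :
    rightEndpoints A ∩ rightEndpoints B = rightEndpoints (A ∪ B) ∩ (A ∩ B) := by
  ext z
  have hunion := mem_rightNhds_union_iff hA hB hAB z
  simp only [rightEndpoints, mem_union, mem_inter_iff, mem_ofPred_eq]
  tauto

theorem ncard_rightEndpoints_add_ncard_rightEndpoints (hA : IsClosed A) (hB : IsClosed B)
    (hAB : (A ∩ B).Finite) (hAfin : (rightEndpoints A).Finite)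
    (hBfin : (rightEndpoints B).Finite) :
    (rightEndpoints A).ncard + (rightEndpoints B).ncard =
      (rightEndpoints (A ∪ B)).ncard + (A ∩ B).ncard := by
  have hunion := rightEndpoints_union_rightEndpoints hA hB hAB
  have hfin : (rightEndpoints (A ∪ B)).Finite :=
    (hAfin.union hBfin).subset (hunion ▸ subset_union_left)
  rw [← ncard_union_add_ncard_inter _ _ hAfin hBfin, ← ncard_union_add_ncard_inter _ _ hfin hAB,
    hunion, rightEndpoints_inter_rightEndpoints hA hB hAB]

end Union

section ComponentCount

variable [Fact (0 < p)] {S : Set (AddCircle p)}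

theorem exists_mem_Ico_coe_eq (z : AddCircle p) (a : ℝ) :
    ∃ t ∈ Ico a (a + p), (t : AddCircle p) = z := by
  have : z ∈ ((↑) : ℝ → AddCircle p) '' Ico a (a + p) := by
    rw [AddCircle.coe_image_Ico_eq]
    exact mem_univ z
  exact this

theorem connectedComponentIn_ne_of_lt_of_lt {r t q t' : ℝ} (hrt : r < t) (htq : t < q)
    (hqt : q < t') (htr : t' < r + p) (hr : (r : AddCircle p) ∉ S) (hq : (q : AddCircle p) ∉ S)
    (ht : (t : AddCircle p) ∈ S) (ht' : (t' : AddCircle p) ∈ S) :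
    connectedComponentIn S (t : AddCircle p) ≠ connectedComponentIn S (t' : AddCircle p) := by
  intro heq
  have hopen : IsOpenMap ((↑) : ℝ → AddCircle p) := QuotientAddGroup.isOpenMap_coe
  have hdisj : Disjoint (((↑) : ℝ → AddCircle p) '' Ioo r q)
      (((↑) : ℝ → AddCircle p) '' Ioo q (r + p)) := by
    rw [disjoint_left]
    rintro _ ⟨a, ha, rfl⟩ ⟨b, hb, hba⟩
    have := (AddCircle.coe_eq_coe_iff_of_mem_Ico (p := p) (a := r)
      ⟨by linarith [hb.1], hb.2⟩ ⟨ha.1.le, by linarith [ha.2]⟩).1 hba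
    linarith [ha.2, hb.1]
  have hcover : S ⊆ ((↑) : ℝ → AddCircle p) '' Ioo r q ∪
      ((↑) : ℝ → AddCircle p) '' Ioo q (r + p) := by
    intro w hw
    obtain ⟨s, hs, rfl⟩ := exists_mem_Ico_coe_eq w r
    have hsr : r ≠ s := by rintro rfl; exact hr hw
    rcases lt_trichotomy s q with hsq | rfl | hsq
    · exact Or.inl ⟨s, ⟨hs.1.lt_of_ne hsr, hsq⟩, rfl⟩
    · exact absurd hw hq
    · exact Or.inr ⟨s, ⟨hsq, hs.2⟩, rfl⟩
  have hsub := isPreconnected_connectedComponentIn.subset_left_of_subset_union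
    (hopen _ isOpen_Ioo) (hopen _ isOpen_Ioo) hdisj
    ((connectedComponentIn_subset S (t : AddCircle p)).trans hcover)
    ⟨_, mem_connectedComponentIn ht, t, ⟨hrt, htq⟩, rfl⟩
  exact disjoint_left.1 hdisj (hsub (heq ▸ mem_connectedComponentIn ht'))
    ⟨t', ⟨hqt, htr⟩, rfl⟩

theorem injOn_connectedComponentIn_rightEndpoints :
    InjOn (connectedComponentIn S) (rightEndpoints S) := by
  intro z hz z' hz' heq
  by_contra hne
  obtain ⟨t, rfl⟩ := QuotientAddGroup.mk_surjective z
  obtain ⟨t', ht', rfl⟩ := exists_mem_Ico_coe_eq z' t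
  have htt' : t < t' := ht'.1.lt_of_ne (by rintro rfl; exact hne rfl)
  obtain ⟨r, htr, hrt', hr⟩ := exists_between_coe_notMem hz htt'
  obtain ⟨q, ht'q, hqt, hq⟩ := exists_between_coe_notMem hz' ht'.2
  refine connectedComponentIn_ne_of_lt_of_lt hrt' ht'q hqt (t' := t + p) (by linarith) hr hq
    hz'.1 ?_ ?_
  · simpa using hz.1
  · simpa using heq.symm

theorem exists_mem_rightEndpoints_connectedComponentIn_eq (hS : IsClosed S) (hne : S ≠ univ)
    {z : AddCircle p} (hz : z ∈ S) :
    ∃ w ∈ rightEndpoints S, connectedComponentIn S w = connectedComponentIn S z := by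
  by_contra! hno
  obtain ⟨t, rfl⟩ := QuotientAddGroup.mk_surjective z
  obtain ⟨y, hy⟩ := (ne_univ_iff_exists_notMem S).1 hne
  obtain ⟨d, hd, rfl⟩ := exists_mem_Ico_coe_eq y t
  set C := connectedComponentIn S (t : AddCircle p)
  have hC : IsClosed (((↑) : ℝ → AddCircle p) ⁻¹' C) :=
    (isClosed_connectedComponentIn hS _).preimage (AddCircle.continuous_mk' p)
  have hsub : Icc t d ⊆ ((↑) : ℝ → AddCircle p) ⁻¹' C := by
    refine (hC.inter isClosed_Icc).Icc_subset_of_forall_mem_nhdsWithin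
      (mem_connectedComponentIn hz) fun s hs => mem_rightNhds_coe.1 ?_
    have hsC : connectedComponentIn S (s : AddCircle p) = C := (connectedComponentIn_eq hs.1).symm
    have hsS : (s : AddCircle p) ∈ S := connectedComponentIn_subset _ _ hs.1
    rw [← hsC]
    exact connectedComponentIn_mem_rightNhds hsS (not_not.1 fun h => hno _ ⟨hsS, h⟩ hsC)
  exact hy (connectedComponentIn_subset _ _ (hsub (right_mem_Icc.2 hd.1)))

theorem image_connectedComponentIn_rightEndpoints (hS : IsClosed S) (hne : S ≠ univ) :
    connectedComponentIn S '' rightEndpoints S = connectedComponentIn S '' S := by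
  refine Subset.antisymm (image_mono fun z hz => hz.1) ?_
  rintro _ ⟨z, hz, rfl⟩
  exact exists_mem_rightEndpoints_connectedComponentIn_eq hS hne hz

theorem ncard_rightEndpoints (hS : IsClosed S) (hne : S ≠ univ) :
    (rightEndpoints S).ncard = (connectedComponentIn S '' S).ncard := by
  rw [← image_connectedComponentIn_rightEndpoints hS hne,
    injOn_connectedComponentIn_rightEndpoints.ncard_image]

theorem finite_image_connectedComponentIn_of_finite_rightEndpoints (hS : IsClosed S)
    (hfin : (rightEndpoints S).Finite) : (connectedComponentIn S '' S).Finite := by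
  by_cases hne : S = univ
  · rw [hne]
    exact finite_image_connectedComponentIn isCompact_univ interior_univ.ge
  · exact image_connectedComponentIn_rightEndpoints hS hne ▸ hfin.image _

end ComponentCount

end CircleSubsets

section LevelSets

variable {p : ℝ} {φ : AddCircle p → ℝ}

theorem finite_level_of_deriv_ne_zero [Fact (0 < p)] {a : ℝ}
    (hφ : Differentiable ℝ fun t : ℝ => φ t)
    (ha : ∀ t : ℝ, φ t = a → deriv (fun t : ℝ => φ t) t ≠ 0) : {z | φ z = a}.Finite := by
  set Z := Icc 0 p ∩ (fun t : ℝ => φ t) ⁻¹' {a}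
  have hZ : IsCompact Z := isCompact_Icc.inter_right (isClosed_singleton.preimage hφ.continuous)
  have hZfin : Z.Finite := by
    by_contra hinf
    obtain ⟨t, ht, hacc⟩ := Set.Infinite.exists_accPt_of_subset_isCompact hinf hZ subset_rfl
    have hne := (hφ t).hasDerivAt.eventually_ne (c := a) (ha t ht.2)
    obtain ⟨s, hsZ, hs⟩ := ((accPt_iff_frequently_nhdsNE.1 hacc).and_eventually hne).exists
    exact hs hsZ.2
  refine (hZfin.image ((↑) : ℝ → AddCircle p)).subset fun z hz => ?_
  obtain ⟨t, ht, rfl⟩ := exists_mem_Ico_coe_eq z 0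
  exact ⟨t, ⟨⟨ht.1, by simpa using ht.2.le⟩, hz⟩, rfl⟩

-- By Sard's theorem almost every level contains no critical point.
theorem ae_finite_level [Fact (0 < p)] (hφ : Differentiable ℝ fun t : ℝ => φ t) :
    ∀ᵐ a : ℝ, {z | φ z = a}.Finite := by
  have hcrit : MeasureTheory.volume
      ((fun t : ℝ => φ t) '' {t | deriv (fun t : ℝ => φ t) t = 0}) = 0 := by
    refine MeasureTheory.addHaar_image_eq_zero_of_det_fderivWithin_eq_zero _
      (fun t _ => (hφ t).hasDerivAt.hasFDerivAt.hasFDerivWithinAt) fun t ht => ?_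
    rw [mem_ofPred_eq] at ht
    simp [ht]
  filter_upwards [MeasureTheory.measure_eq_zero_iff_ae_notMem.1 hcrit] with a ha
  exact finite_level_of_deriv_ne_zero hφ fun t ht hd => ha ⟨t, hd, ht⟩

end LevelSets

instance fact_two_pi_pos : Fact (0 < 2 * π) :=
  ⟨two_pi_pos⟩

section PersistentBetti

theorem persBetti_eq_ncard (F : Circ → ℝ × ℝ) (u v : ℝ × ℝ) :
    persBetti F u v = (connectedComponentIn (F ⁻¹' Iic v) '' (F ⁻¹' Iic u)).ncard :=
  rfl

/-- Two curves have the same persistent Betti numbers in degree zero on all of `Δ⁺`. -/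
def SamePersBetti (F G : Circ → ℝ × ℝ) : Prop :=
  ∀ u v : ℝ × ℝ, u.1 < v.1 → u.2 < v.2 → persBetti F u v = persBetti G u v

/-- Two curves have the same persistent Betti numbers after every reflection in `Σ₂`. -/
def SameReflectedPersBetti (F G : Circ → ℝ × ℝ) : Prop :=
  ∀ s ∈ Sigma2, SamePersBetti (s ∘ F) (s ∘ G)

/-- Both coordinate lines through `v` meet the curve at finitely many parameters. -/
def HasFiniteLevelsAt (F : Circ → ℝ × ℝ) (v : ℝ × ℝ) : Prop :=
  {z | (F z).1 = v.1}.Finite ∧ {z | (F z).2 = v.2}.Finite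

variable {F G : Circ → ℝ × ℝ} {s : ℝ × ℝ → ℝ × ℝ} {u v : ℝ × ℝ}

theorem SamePersBetti.symm (h : SamePersBetti F G) : SamePersBetti G F := fun u v h₁ h₂ =>
  (h u v h₁ h₂).symm

theorem continuous_of_mem_Sigma2 (hs : s ∈ Sigma2) : Continuous s := by
  rcases hs with rfl | rfl | rfl | rfl <;> fun_prop

theorem comp_mem_Sigma2 {s' : ℝ × ℝ → ℝ × ℝ} (hs : s ∈ Sigma2) (hs' : s' ∈ Sigma2) :
    s ∘ s' ∈ Sigma2 := by
  rcases hs with rfl | rfl | rfl | rfl <;> rcases hs' with rfl | rfl | rfl | rfl <;>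
    simp [Sigma2, Function.comp_def, funext_iff]

theorem HasFiniteLevelsAt.comp (hv : HasFiniteLevelsAt F v) (hs : s ∈ Sigma2) :
    HasFiniteLevelsAt (s ∘ F) (s v) := by
  rcases hs with rfl | rfl | rfl | rfl <;> simpa [HasFiniteLevelsAt] using hv

theorem SameReflectedPersBetti.symm (h : SameReflectedPersBetti F G) :
    SameReflectedPersBetti G F := fun s hs => (h s hs).symm

theorem SameReflectedPersBetti.comp (h : SameReflectedPersBetti F G) (hs : s ∈ Sigma2) :
    SameReflectedPersBetti (s ∘ F) (s ∘ G) := fun _ hs' => h _ (comp_mem_Sigma2 hs' hs)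

theorem SameReflectedPersBetti.samePersBetti (h : SameReflectedPersBetti F G) :
    SamePersBetti F G :=
  h id (by simp [Sigma2])

theorem SameReflectedPersBetti.neg (h : SameReflectedPersBetti F G) :
    SameReflectedPersBetti (-F) (-G) :=
  h.comp (s := fun q => (-q.1, -q.2)) (by simp [Sigma2])

theorem persBetti_swap (F : Circ → ℝ × ℝ) (u v : ℝ × ℝ) :
    persBetti (Prod.swap ∘ F) u v = persBetti F u.swap v.swap := by
  have hpre (w : ℝ × ℝ) : Prod.swap ∘ F ⁻¹' Dset w = F ⁻¹' Dset w.swap :=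
    ext fun z => and_comm
  simp only [persBetti, hpre]

theorem swap_comp_comp_swap_mem_Sigma2 (hs : s ∈ Sigma2) :
    Prod.swap ∘ s ∘ Prod.swap ∈ Sigma2 := by
  rcases hs with rfl | rfl | rfl | rfl <;> simp [Sigma2, Function.comp_def, funext_iff]

theorem SameReflectedPersBetti.swap (h : SameReflectedPersBetti F G) :
    SameReflectedPersBetti (Prod.swap ∘ F) (Prod.swap ∘ G) := by
  intro s hs u v h₁ h₂
  have hcomp (H : Circ → ℝ × ℝ) :
      s ∘ Prod.swap ∘ H = Prod.swap ∘ (Prod.swap ∘ s ∘ Prod.swap) ∘ H := rfl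
  rw [hcomp, hcomp, persBetti_swap, persBetti_swap]
  exact h _ (swap_comp_comp_swap_mem_Sigma2 hs) _ _ h₂ h₁

theorem persBetti_eq_zero_iff (hF : Continuous F) (h₁ : u.1 < v.1) (h₂ : u.2 < v.2) :
    persBetti F u v = 0 ↔ F ⁻¹' Iic u = ∅ := by
  have hsub : F ⁻¹' Iic u ⊆ interior (F ⁻¹' Iic v) := by
    refine Subset.trans (fun z hz => ?_) (preimage_interior_subset_interior_preimage hF)
    rw [mem_preimage, ← Prod.mk.eta (p := v), Iic_prod_eq, interior_prod_eq, interior_Iic,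
      interior_Iic]
    exact ⟨hz.1.trans_lt h₁, hz.2.trans_lt h₂⟩
  have hfin := finite_image_connectedComponentIn (isClosed_Iic.preimage hF).isCompact hsub
  rw [persBetti_eq_ncard, ncard_eq_zero hfin, image_eq_empty]

theorem SamePersBetti.exists_le (h : SamePersBetti F G) (hF : Continuous F) (hG : Continuous G)
    (z : Circ) : ∃ w, F w ≤ G z := by
  have h₁ : (G z).1 < (G z + (1, 1)).1 := lt_add_one _
  have h₂ : (G z).2 < (G z + (1, 1)).2 := lt_add_one _
  have hz : (G ⁻¹' Iic (G z)).Nonempty := ⟨z, mem_preimage.2 self_mem_Iic⟩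
  have hne := (persBetti_eq_zero_iff hG h₁ h₂).not.2 hz.ne_empty
  rw [← h _ _ h₁ h₂, persBetti_eq_zero_iff hF h₁ h₂] at hne
  exact nonempty_iff_ne_empty.2 hne

theorem SameReflectedPersBetti.exists_ge (h : SameReflectedPersBetti F G) (hF : Continuous F)
    (hG : Continuous G) (z : Circ) : ∃ w, G z ≤ F w := by
  simpa using h.neg.samePersBetti.exists_le hF.neg hG.neg z

theorem SameReflectedPersBetti.preimage_Iic_eq_univ_iff (h : SameReflectedPersBetti F G)
    (hF : Continuous F) (hG : Continuous G) : F ⁻¹' Iic v = univ ↔ G ⁻¹' Iic v = univ := by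
  simp only [eq_univ_iff_forall, mem_preimage, mem_Iic]
  constructor <;> intro hle z
  · obtain ⟨w, hw⟩ := h.exists_ge hF hG z
    exact hw.trans (hle w)
  · obtain ⟨w, hw⟩ := h.symm.exists_ge hG hF z
    exact hw.trans (hle w)

theorem finite_rightEndpoints_preimage_Iic (hF : Continuous F) (hv : HasFiniteLevelsAt F v) :
    (rightEndpoints (F ⁻¹' Iic v)).Finite := by
  refine (hv.1.union hv.2).subset ((rightEndpoints_subset_frontier _).trans ?_)
  refine (frontier_inter_subset {z | (F z).1 ≤ v.1} {z | (F z).2 ≤ v.2}).trans ?_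
  exact union_subset_union
    (inter_subset_left.trans (frontier_le_subset_eq hF.fst continuous_const))
    (inter_subset_right.trans (frontier_le_subset_eq hF.snd continuous_const))

theorem eventually_persBetti_eq (hF : Continuous F) (hv : HasFiniteLevelsAt F v) :
    ∀ᶠ w in 𝓝[≥] v, persBetti F v w = persBetti F v v := by
  have hclosed : IsClosed (F ⁻¹' Iic v) := isClosed_Iic.preimage hF
  simp only [persBetti_eq_ncard]
  refine eventually_ncard_image_connectedComponentIn_eq hclosed.isCompact
    (finite_image_connectedComponentIn_of_finite_rightEndpoints hclosed
      (finite_rightEndpoints_preimage_Iic hF hv)) ?_ fun W hW hKW =>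
    (eventually_preimage_Iic_subset hF hW hKW).filter_mono nhdsWithin_le_nhds
  filter_upwards [self_mem_nhdsWithin] with w hw
  exact preimage_mono (Iic_subset_Iic.2 hw)

theorem SamePersBetti.persBetti_self_eq (h : SamePersBetti F G) (hF : Continuous F)
    (hG : Continuous G) (hFv : HasFiniteLevelsAt F v) (hGv : HasFiniteLevelsAt G v) :
    persBetti F v v = persBetti G v v := by
  have hle : 𝓝[>] v.1 ×ˢ 𝓝[>] v.2 ≤ 𝓝[≥] v := by
    rw [← nhdsWithin_prod_eq]
    exact nhdsWithin_mono v fun w hw => ⟨le_of_lt hw.1, le_of_lt hw.2⟩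
  have hgt : ∀ᶠ w : ℝ × ℝ in 𝓝[>] v.1 ×ˢ 𝓝[>] v.2, v.1 < w.1 ∧ v.2 < w.2 :=
    prod_mem_prod self_mem_nhdsWithin self_mem_nhdsWithin
  obtain ⟨w, hFw, hGw, hw⟩ := ((eventually_persBetti_eq hF hFv).filter_mono hle |>.and
    ((eventually_persBetti_eq hG hGv).filter_mono hle |>.and hgt)).exists
  rw [← hFw, ← hGw, h v w hw.1 hw.2]

theorem SameReflectedPersBetti.ncard_rightEndpoints_eq (h : SameReflectedPersBetti F G)
    (hF : Continuous F) (hG : Continuous G) (hFv : HasFiniteLevelsAt F v)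
    (hGv : HasFiniteLevelsAt G v) :
    (rightEndpoints (F ⁻¹' Iic v)).ncard = (rightEndpoints (G ⁻¹' Iic v)).ncard := by
  have huniv := h.preimage_Iic_eq_univ_iff hF hG (v := v)
  by_cases hFuniv : F ⁻¹' Iic v = univ
  · rw [hFuniv, huniv.1 hFuniv]
  · rw [ncard_rightEndpoints (isClosed_Iic.preimage hF) hFuniv,
      ncard_rightEndpoints (isClosed_Iic.preimage hG) (huniv.not.1 hFuniv)]
    simpa only [persBetti_eq_ncard] using h.samePersBetti.persBetti_self_eq hF hG hFv hGv

theorem ncard_rightEndpoints_preimage_Iic_add (hF : Continuous F) (hv : HasFiniteLevelsAt F v)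
    {M : ℝ} (hM : ∀ z, (F z).1 ≤ M) :
    (rightEndpoints (F ⁻¹' Iic v)).ncard +
        (rightEndpoints ((fun q : ℝ × ℝ => (-q.1, q.2)) ∘ F ⁻¹' Iic (-v.1, v.2))).ncard =
      (rightEndpoints (F ⁻¹' Iic (M, v.2))).ncard +
        {z | (F z).1 = v.1 ∧ (F z).2 ≤ v.2}.ncard := by
  have hs : (fun q : ℝ × ℝ => (-q.1, q.2)) ∈ Sigma2 := by simp [Sigma2]
  have hsF := (continuous_of_mem_Sigma2 hs).comp hF
  set A := F ⁻¹' Iic v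
  set B := (fun q : ℝ × ℝ => (-q.1, q.2)) ∘ F ⁻¹' Iic (-v.1, v.2)
  have hmemA (z : Circ) : z ∈ A ↔ (F z).1 ≤ v.1 ∧ (F z).2 ≤ v.2 := Iff.rfl
  have hmemB (z : Circ) : z ∈ B ↔ v.1 ≤ (F z).1 ∧ (F z).2 ≤ v.2 :=
    and_congr_left fun _ => neg_le_neg_iff
  have hunion : A ∪ B = F ⁻¹' Iic (M, v.2) := by
    ext z
    rw [mem_union, hmemA, hmemB, ← or_and_right]
    exact and_congr_left fun _ => iff_of_true (le_total _ _) (hM z)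
  have hinter : A ∩ B = {z | (F z).1 = v.1 ∧ (F z).2 ≤ v.2} := by
    ext z
    rw [mem_inter_iff, hmemA, hmemB, ← and_and_right, ← le_antisymm_iff]
    rfl
  rw [← hunion, ← hinter]
  exact ncard_rightEndpoints_add_ncard_rightEndpoints (isClosed_Iic.preimage hF)
    (isClosed_Iic.preimage hsF) (hinter ▸ hv.1.subset fun z hz => hz.1)
    (finite_rightEndpoints_preimage_Iic hF hv) (finite_rightEndpoints_preimage_Iic hsF (hv.comp hs))

theorem SameReflectedPersBetti.ncard_level_eq (h : SameReflectedPersBetti F G)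
    (hF : Continuous F) (hG : Continuous G) (hFv : HasFiniteLevelsAt F v)
    (hGv : HasFiniteLevelsAt G v) :
    {z | (F z).1 = v.1 ∧ (F z).2 ≤ v.2}.ncard = {z | (G z).1 = v.1 ∧ (G z).2 ≤ v.2}.ncard := by
  obtain ⟨M, hM⟩ := ((isCompact_range hF.fst).union (isCompact_range hG.fst)).bddAbove
  have hFM (z : Circ) : (F z).1 < M + 1 := (hM (Or.inl ⟨z, rfl⟩)).trans_lt (lt_add_one M)
  have hGM (z : Circ) : (G z).1 < M + 1 := (hM (Or.inr ⟨z, rfl⟩)).trans_lt (lt_add_one M)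
  have hFv' : HasFiniteLevelsAt F (M + 1, v.2) := ⟨by simp [(hFM _).ne], hFv.2⟩
  have hGv' : HasFiniteLevelsAt G (M + 1, v.2) := ⟨by simp [(hGM _).ne], hGv.2⟩
  have hs : (fun q : ℝ × ℝ => (-q.1, q.2)) ∈ Sigma2 := by simp [Sigma2]
  have hsc := continuous_of_mem_Sigma2 hs
  have hcountF := ncard_rightEndpoints_preimage_Iic_add hF hFv fun z => (hFM z).le
  have hcountG := ncard_rightEndpoints_preimage_Iic_add hG hGv fun z => (hGM z).le
  rw [h.ncard_rightEndpoints_eq hF hG hFv hGv, h.ncard_rightEndpoints_eq hF hG hFv' hGv',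
    (h.comp hs).ncard_rightEndpoints_eq (hsc.comp hF) (hsc.comp hG) (hFv.comp hs)
      (hGv.comp hs)] at hcountF
  exact Nat.add_left_cancel (hcountF.symm.trans hcountG)

end PersistentBetti

section DenseLevels

variable {R : Type*} [LinearOrder R] [TopologicalSpace R] [OrderTopology R] [DenselyOrdered R]
  {D : Set R}

theorem image_subset_image_of_ncard_eq_ncard [NoMinOrder R] [NoMaxOrder R] {α β : Type*}
    {P : Set α} {Q : Set β} {f : α → R} {g : β → R} (hP : P.Finite) (hQ : Q.Finite)
    (hD : Dense D)
    (h : ∀ b ∈ D, {x | x ∈ P ∧ f x ≤ b}.ncard = {y | y ∈ Q ∧ g y ≤ b}.ncard) :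
    f '' P ⊆ g '' Q := by
  rintro _ ⟨x, hx, rfl⟩
  by_contra hfx
  obtain ⟨l, u, hlu, hgap⟩ := mem_nhds_iff_exists_Ioo_subset.1
    ((hQ.image g).isClosed.isOpen_compl.mem_nhds hfx)
  obtain ⟨b₁, hb₁D, hlb₁, hb₁x⟩ := hD.exists_between hlu.1
  obtain ⟨b₂, hb₂D, hxb₂, hb₂u⟩ := hD.exists_between hlu.2
  have hb : b₁ ≤ b₂ := (hb₁x.trans hxb₂).le
  have hQeq : {y | y ∈ Q ∧ g y ≤ b₁} = {y | y ∈ Q ∧ g y ≤ b₂} := by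
    refine ext fun y => and_congr_right fun hy => ⟨hb.trans', fun hyb₂ => ?_⟩
    by_contra! hyb₁
    exact hgap ⟨hlb₁.trans hyb₁, hyb₂.trans_lt hb₂u⟩ ⟨y, hy, rfl⟩
  have hPlt : {x | x ∈ P ∧ f x ≤ b₁}.ncard < {x | x ∈ P ∧ f x ≤ b₂}.ncard :=
    ncard_lt_ncard ⟨fun _ hy => ⟨hy.1, hy.2.trans hb⟩, fun hsub =>
      (hsub ⟨hx, hxb₂.le⟩).2.not_gt hb₁x⟩ (hP.subset fun _ hy => hy.1)
  rw [h b₁ hb₁D, h b₂ hb₂D, hQeq] at hPlt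
  exact hPlt.false

theorem subsingleton_of_isPreconnected_of_disjoint_dense {S : Set R} (hS : IsPreconnected S)
    (hD : Dense D) (hSD : Disjoint S D) : S.Subsingleton := by
  refine fun a ha b hb => le_antisymm ?_ ?_ <;> by_contra! hab
  · obtain ⟨d, hdD, hd⟩ := hD.exists_between hab
    exact disjoint_left.1 hSD (hS.Icc_subset hb ha (Ioo_subset_Icc_self hd)) hdD
  · obtain ⟨d, hdD, hd⟩ := hD.exists_between hab
    exact disjoint_left.1 hSD (hS.Icc_subset ha hb (Ioo_subset_Icc_self hd)) hdD

end DenseLevels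

/-- A continuous closed curve that meets almost every horizontal and almost every vertical line at
finitely many parameters. -/
structure TameCurve (F : Circ → ℝ × ℝ) : Prop where
  continuous : Continuous F
  ae_finite_fst : ∀ᵐ a : ℝ, {z | (F z).1 = a}.Finite
  ae_finite_snd : ∀ᵐ b : ℝ, {z | (F z).2 = b}.Finite

section Recovery

variable {F G : Circ → ℝ × ℝ}

theorem tameCurve_of_isC1 (hF : IsC1 F) : TameCurve F where
  continuous := (QuotientAddGroup.isQuotientMap_mk _).continuous_iff.2 hF.continuous
  ae_finite_fst := ae_finite_level (hF.fst.differentiable one_ne_zero)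
  ae_finite_snd := ae_finite_level (hF.snd.differentiable one_ne_zero)

theorem TameCurve.swap (hF : TameCurve F) : TameCurve (Prod.swap ∘ F) :=
  ⟨continuous_swap.comp hF.continuous, hF.ae_finite_snd, hF.ae_finite_fst⟩

theorem TameCurve.dense_finite_fst (hF : TameCurve F) (hG : TameCurve G) :
    Dense {a : ℝ | {z | (F z).1 = a}.Finite ∧ {z | (G z).1 = a}.Finite} :=
  MeasureTheory.Measure.dense_of_ae (hF.ae_finite_fst.and hG.ae_finite_fst)

theorem SameReflectedPersBetti.mem_range_of_finite_fst (h : SameReflectedPersBetti F G)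
    (hF : TameCurve F) (hG : TameCurve G) {z : Circ} (hFz : {w | (F w).1 = (F z).1}.Finite)
    (hGz : {w | (G w).1 = (F z).1}.Finite) : F z ∈ range G := by
  have hcount : ∀ b ∈ {b : ℝ | {w | (F w).2 = b}.Finite ∧ {w | (G w).2 = b}.Finite},
      {w | (F w).1 = (F z).1 ∧ (F w).2 ≤ b}.ncard =
        {w | (G w).1 = (F z).1 ∧ (G w).2 ≤ b}.ncard := fun b hb =>
    h.ncard_level_eq hF.continuous hG.continuous (v := ((F z).1, b)) ⟨hFz, hb.1⟩ ⟨hGz, hb.2⟩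
  obtain ⟨w, hw₁, hw₂⟩ := image_subset_image_of_ncard_eq_ncard hFz hGz
    (hF.swap.dense_finite_fst hG.swap) hcount ⟨z, rfl, rfl⟩
  exact ⟨w, Prod.ext hw₁ hw₂⟩

theorem SameReflectedPersBetti.fst_subsingleton (h : SameReflectedPersBetti F G)
    (hF : TameCurve F) (hG : TameCurve G) {N : Set Circ} (hN : IsPreconnected N)
    (hNG : ∀ z ∈ N, F z ∉ range G) : ((fun z => (F z).1) '' N).Subsingleton := by
  refine subsingleton_of_isPreconnected_of_disjoint_dense
    (hN.image _ hF.continuous.fst.continuousOn) (hF.dense_finite_fst hG) (disjoint_left.2 ?_)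
  rintro _ ⟨z, hz, rfl⟩ hfin
  exact hNG z hz (h.mem_range_of_finite_fst hF hG hfin.1 hfin.2)

theorem SameReflectedPersBetti.eqOn_of_isPreconnected (h : SameReflectedPersBetti F G)
    (hF : TameCurve F) (hG : TameCurve G) {N : Set Circ} (hN : IsPreconnected N)
    (hNG : ∀ z ∈ N, F z ∉ range G) {z w : Circ} (hz : z ∈ N) (hw : w ∈ N) : F z = F w := by
  have hNG' : ∀ z ∈ N, (Prod.swap ∘ F) z ∉ range (Prod.swap ∘ G) := fun z hz ⟨w, hw⟩ =>
    hNG z hz ⟨w, Prod.swap_injective hw⟩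
  exact Prod.ext (h.fst_subsingleton hF hG hN hNG ⟨z, hz, rfl⟩ ⟨w, hw, rfl⟩)
    (h.swap.fst_subsingleton hF.swap hG.swap hN hNG' ⟨z, hz, rfl⟩ ⟨w, hw, rfl⟩)

theorem SameReflectedPersBetti.eq_of_notMem_range (h : SameReflectedPersBetti F G)
    (hF : TameCurve F) (hG : TameCurve G) {z : Circ} (hz : F z ∉ range G) (w : Circ) :
    F w = F z := by
  have hW : IsOpen {t | F t ∉ range G} :=
    (isCompact_range hG.continuous).isClosed.isOpen_compl.preimage hF.continuous
  have hopen : IsOpen (F ⁻¹' {F z}) := by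
    refine isOpen_iff_mem_nhds.2 fun t ht => ?_
    have htW : F t ∉ range G := by rwa [mem_preimage.1 ht]
    filter_upwards [connectedComponentIn_mem_nhds (hW.mem_nhds htW)] with t' ht'
    exact (h.eqOn_of_isPreconnected hF hG isPreconnected_connectedComponentIn
      (connectedComponentIn_subset _ _) ht' (mem_connectedComponentIn htW)).trans ht
  have huniv := IsClopen.eq_univ ⟨isClosed_singleton.preimage hF.continuous, hopen⟩ ⟨z, rfl⟩
  exact eq_univ_iff_forall.1 huniv w

theorem SameReflectedPersBetti.range_subset (h : SameReflectedPersBetti F G)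
    (hF : TameCurve F) (hG : TameCurve G) : range F ⊆ range G := by
  rintro _ ⟨z, rfl⟩
  by_contra hz
  have hconst := h.eq_of_notMem_range hF hG hz
  obtain ⟨w, hwz⟩ := h.symm.samePersBetti.exists_le hG.continuous hF.continuous z
  obtain ⟨t, htw⟩ := h.samePersBetti.exists_le hF.continuous hG.continuous w
  exact hz ⟨w, hwz.antisymm (hconst t ▸ htw)⟩

end Recovery

theorem image_eq_of_persBetti_eq_general (F G : Circ → ℝ × ℝ) (hF : TameCurve F)
    (hG : TameCurve G) (h : SameReflectedPersBetti F G) : range F = range G :=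
  (h.range_subset hF hG).antisymm (h.symm.range_subset hG hF)

/-- If two generic functions, composed with every element of the reflection group `Σ₂`,
have the same persistent Betti numbers on all of `Δ⁺`, then their images coincide. -/
theorem image_eq_of_persBetti_eq (F G : Circ → ℝ × ℝ)
    (hF : Generic F) (hG : Generic G)
    (h : ∀ s ∈ Sigma2, ∀ u v : ℝ × ℝ, u.1 < v.1 → u.2 < v.2 →
      persBetti (s ∘ F) u v = persBetti (s ∘ G) u v) :
    Set.range F = Set.range G :=
  image_eq_of_persBetti_eq_general F G (tameCurve_of_isC1 hF.1) (tameCurve_of_isC1 hG.1) h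
end
end
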